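/- Let f : {0,1}^n × {0,1}^n → {0,1} be a total Boolean function and let μ be a product distribution on {0,1}^n × {0,1}^n. Then there exists a universal constant C > 0 such that the distributional communication complexity of f with error 0.49 under μ satisfies CC^μ_{0.49}(f) ≤ C · (log prt_{1/8}(f) · log log prt_{1/8}(f))^2 (for log prt_{1/8}(f) ≥ 2). -/

import Mathlib

open scoped BigOperators
open scoped Classical

noncomputable section

/-! ## Probability distributions on finite types -/

/-- `p` is a probability distribution on the finite type `α`. -/
def IsDist {α : Type} [Fintype α] (p : α → ℝ) : Prop :=
  (∀ a, 0 ≤ p a) ∧ ∑ a, p a = 1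

/-- `μ` (in curried form) is a probability distribution on `X × Y`. -/
def IsDist2 {X Y : Type} [Fintype X] [Fintype Y] (μ : X → Y → ℝ) : Prop :=
  (∀ x y, 0 ≤ μ x y) ∧ ∑ x, ∑ y, μ x y = 1

/-! ## Deterministic communication protocols -/

/-- A deterministic two-party communication protocol: a finite binary tree where each
internal node is owned by Alice (`nodeA`) or Bob (`nodeB`) and is labeled by a function
of that player's input choosing one of the two children; leaves carry Boolean outputs. -/
inductive Protocol (X Y : Type) : Type
  | leaf : Bool → Protocol X Y
  | nodeA : (X → Bool) → Protocol X Y → Protocol X Y → Protocol X Y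
  | nodeB : (Y → Bool) → Protocol X Y → Protocol X Y → Protocol X Y

namespace Protocol

def eval {X Y : Type} : Protocol X Y → X → Y → Bool
  | leaf b, _, _ => b
  | nodeA g t0 t1, x, y => if g x then eval t1 x y else eval t0 x y
  | nodeB g t0 t1, x, y => if g y then eval t1 x y else eval t0 x y

/-- Depth (number of bits communicated in the worst case). -/
def depth {X Y : Type} : Protocol X Y → ℕ
  | leaf _ => 0
  | nodeA _ t0 t1 => max (depth t0) (depth t1) + 1
  | nodeB _ t0 t1 => max (depth t0) (depth t1) + 1

/-- Number of leaves. -/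
def leavesCount {X Y : Type} : Protocol X Y → ℕ
  | leaf _ => 1
  | nodeA _ t0 t1 => leavesCount t0 + leavesCount t1
  | nodeB _ t0 t1 => leavesCount t0 + leavesCount t1

/-- The sequence of bits communicated on input `(x, y)`. -/
def transcript {X Y : Type} : Protocol X Y → X → Y → List Bool
  | leaf _, _, _ => []
  | nodeA g t0 t1, x, y =>
      if g x then true :: transcript t1 x y else false :: transcript t0 x y
  | nodeB g t0 t1, x, y =>
      if g y then true :: transcript t1 x y else false :: transcript t0 x y

end Protocol

/-- Error of a deterministic protocol w.r.t. input distribution `μ`. -/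
def commErr {X Y : Type} [Fintype X] [Fintype Y]
    (μ : X → Y → ℝ) (f : X → Y → Bool) (P : Protocol X Y) : ℝ :=
  ∑ x, ∑ y, if P.eval x y ≠ f x y then μ x y else 0

/-- Distributional communication complexity `CC^μ_ε(f)`: the minimum depth of a
deterministic protocol erring with probability at most `ε` under `μ`. -/
def CCdist {X Y : Type} [Fintype X] [Fintype Y]
    (μ : X → Y → ℝ) (f : X → Y → Bool) (ε : ℝ) : ℕ :=
  sInf {d : ℕ | ∃ P : Protocol X Y, P.depth ≤ d ∧ commErr μ f P ≤ ε}

/-- The advantage `adv_μ(Π)` of a protocol w.r.t. a (not necessarily normalized) measure. -/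
def protAdv {X Y : Type} [Fintype X] [Fintype Y]
    (μ : X → Y → ℝ) (f : X → Y → Bool) (P : Protocol X Y) : ℝ :=
  ∑ x, ∑ y, if P.eval x y = f x y then μ x y else - μ x y

/-! ## Information complexity -/

/-- Probability of an event under a finite (possibly unnormalized) distribution. -/
def prOf {Ω : Type} [Fintype Ω] (p : Ω → ℝ) (q : Ω → Prop) : ℝ :=
  ∑ ω, if q ω then p ω else 0

/-- Conditional mutual information `I(A ; B | C)` (in bits) of random variables `A`, `B`, `C`
defined on a finite probability space `(Ω, p)`. -/
def condMI {Ω α β γ : Type} [Fintype Ω] (p : Ω → ℝ)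
    (A : Ω → α) (B : Ω → β) (C : Ω → γ) : ℝ :=
  ∑ ω, p ω * Real.logb 2 (
    (prOf p (fun ω' => A ω' = A ω ∧ B ω' = B ω ∧ C ω' = C ω) *
      prOf p (fun ω' => C ω' = C ω)) /
    (prOf p (fun ω' => A ω' = A ω ∧ C ω' = C ω) *
      prOf p (fun ω' => B ω' = B ω ∧ C ω' = C ω)))

/-- Internal information cost `IC^μ(Π) = I(X;T|Y) + I(Y;T|X)` of the public-coin protocol
given by a distribution `ρ` on `Fin m` together with deterministic protocols `P r`; the
transcript `T` consists of the public randomness together with the communicated bits. -/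
def infoCost {X Y : Type} [Fintype X] [Fintype Y] (μ : X → Y → ℝ)
    {m : ℕ} (ρ : Fin m → ℝ) (P : Fin m → Protocol X Y) : ℝ :=
  condMI (fun ω : X × Y × Fin m => μ ω.1 ω.2.1 * ρ ω.2.2)
      (fun ω => ω.1)
      (fun ω => (ω.2.2, (P ω.2.2).transcript ω.1 ω.2.1))
      (fun ω => ω.2.1)
  + condMI (fun ω : X × Y × Fin m => μ ω.1 ω.2.1 * ρ ω.2.2)
      (fun ω => ω.2.1)
      (fun ω => (ω.2.2, (P ω.2.2).transcript ω.1 ω.2.1))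
      (fun ω => ω.1)

/-- Error of a public-coin protocol under input distribution `μ` and coin distribution `ρ`. -/
def randErr {X Y : Type} [Fintype X] [Fintype Y] (μ : X → Y → ℝ) (f : X → Y → Bool)
    {m : ℕ} (ρ : Fin m → ℝ) (P : Fin m → Protocol X Y) : ℝ :=
  ∑ x, ∑ y, ∑ r, if (P r).eval x y ≠ f x y then μ x y * ρ r else 0

/-- `IC^μ_ε(f)`: infimum of the information cost over all public-coin protocols computing
`f` with error at most `ε` under `μ`. -/
def ICmu {X Y : Type} [Fintype X] [Fintype Y]
    (μ : X → Y → ℝ) (f : X → Y → Bool) (ε : ℝ) : ℝ :=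
  sInf { c : ℝ | ∃ (m : ℕ) (ρ : Fin m → ℝ) (P : Fin m → Protocol X Y),
    IsDist ρ ∧ randErr μ f ρ P ≤ ε ∧ c = infoCost μ ρ P }

/-- `IC_ε(f) = max_μ IC^μ_ε(f)`. -/
def IC {X Y : Type} [Fintype X] [Fintype Y] (f : X → Y → Bool) (ε : ℝ) : ℝ :=
  sSup { c : ℝ | ∃ μ : X → Y → ℝ, IsDist2 μ ∧ c = ICmu μ f ε }

/-! ## Rectangles, smooth rectangle bound and partition bound -/

/-- Total weight of rectangles containing `(x, y)`: a combinatorial rectangle is a pair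
`R = (S, T)` of finite sets, and `(x,y) ∈ R` iff `x ∈ S ∧ y ∈ T`. -/
def rcov {X Y : Type} [Fintype X] [Fintype Y]
    (w : Finset X × Finset Y → ℝ) (x : X) (y : Y) : ℝ :=
  ∑ R : Finset X × Finset Y, if x ∈ R.1 ∧ y ∈ R.2 then w R else 0

/-- `μ(R)` for a rectangle `R`. -/
def rMass {X Y : Type} [Fintype X] [Fintype Y]
    (μ : X → Y → ℝ) (R : Finset X × Finset Y) : ℝ :=
  ∑ x, ∑ y, if x ∈ R.1 ∧ y ∈ R.2 then μ x y else 0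

/-- `μ_z(R) = μ(R ∩ f⁻¹(z))` for a rectangle `R`. -/
def rMassZ {X Y : Type} [Fintype X] [Fintype Y]
    (μ : X → Y → ℝ) (f : X → Y → Bool) (z : Bool) (R : Finset X × Finset Y) : ℝ :=
  ∑ x, ∑ y, if (x ∈ R.1 ∧ y ∈ R.2) ∧ f x y = z then μ x y else 0

/-- `μ_z = μ(f⁻¹(z))`. -/
def totalZ {X Y : Type} [Fintype X] [Fintype Y]
    (μ : X → Y → ℝ) (f : X → Y → Bool) (z : Bool) : ℝ :=
  ∑ x, ∑ y, if f x y = z then μ x y else 0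

/-- `|μ|`, the total mass of a measure. -/
def totalMass {X Y : Type} [Fintype X] [Fintype Y] (μ : X → Y → ℝ) : ℝ :=
  ∑ x, ∑ y, μ x y

/-- Restriction of a measure to a rectangle. -/
def restrictRect {X Y : Type} (μ : X → Y → ℝ) (R : Finset X × Finset Y) : X → Y → ℝ :=
  fun x y => if x ∈ R.1 ∧ y ∈ R.2 then μ x y else 0

/-- Distributional smooth rectangle bound `srec^{z,μ}_{ε,δ}(f)` (LP optimal value). -/
def srecZmu {X Y : Type} [Fintype X] [Fintype Y]
    (μ : X → Y → ℝ) (f : X → Y → Bool) (z : Bool) (ε δ : ℝ) : ℝ :=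
  sInf { v : ℝ | ∃ w : Finset X × Finset Y → ℝ,
    (∀ R, 0 ≤ w R) ∧
    ((1 - ε) * totalZ μ f z ≤ ∑ x, ∑ y, if f x y = z then μ x y * rcov w x y else 0) ∧
    (∀ x y, f x y ≠ z → rcov w x y ≤ δ) ∧
    (∀ x y, rcov w x y ≤ 1) ∧
    v = ∑ R : Finset X × Finset Y, w R }

/-- `srec^μ_{ε,δ}(f) = max{srec^{0,μ}_{ε,δ}(f), srec^{1,μ}_{ε,δ}(f)}`. -/
def srecMu {X Y : Type} [Fintype X] [Fintype Y]
    (μ : X → Y → ℝ) (f : X → Y → Bool) (ε δ : ℝ) : ℝ :=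
  max (srecZmu μ f false ε δ) (srecZmu μ f true ε δ)

/-- Smooth rectangle bound `srec^z_{ε,δ}(f)` (LP optimal value). -/
def srecZ {X Y : Type} [Fintype X] [Fintype Y]
    (f : X → Y → Bool) (z : Bool) (ε δ : ℝ) : ℝ :=
  sInf { v : ℝ | ∃ w : Finset X × Finset Y → ℝ,
    (∀ R, 0 ≤ w R) ∧
    (∀ x y, f x y = z → 1 - ε ≤ rcov w x y) ∧
    (∀ x y, f x y ≠ z → rcov w x y ≤ δ) ∧
    (∀ x y, rcov w x y ≤ 1) ∧
    v = ∑ R : Finset X × Finset Y, w R }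

/-- `srec_{ε,δ}(f) = max{srec^0_{ε,δ}(f), srec^1_{ε,δ}(f)}`. -/
def srec {X Y : Type} [Fintype X] [Fintype Y] (f : X → Y → Bool) (ε δ : ℝ) : ℝ :=
  max (srecZ f false ε δ) (srecZ f true ε δ)

/-- Partition bound `prt_ε(f)` (LP optimal value). -/
def prt {X Y : Type} [Fintype X] [Fintype Y] (f : X → Y → Bool) (ε : ℝ) : ℝ :=
  sInf { v : ℝ | ∃ w : Bool → Finset X × Finset Y → ℝ,
    (∀ z R, 0 ≤ w z R) ∧
    (∀ x y, 1 - ε ≤ rcov (w (f x y)) x y) ∧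
    (∀ x y, rcov (w false) x y + rcov (w true) x y = 1) ∧
    v = ∑ R : Finset X × Finset Y, (w false R + w true R) }

/-! ### General-output versions -/

/-- Smooth rectangle bound `srec^z_{ε,δ}(f)` for general output alphabet. -/
def srecZgen {X Y Z : Type} [Fintype X] [Fintype Y]
    (f : X → Y → Z) (z : Z) (ε δ : ℝ) : ℝ :=
  sInf { v : ℝ | ∃ w : Finset X × Finset Y → ℝ,
    (∀ R, 0 ≤ w R) ∧
    (∀ x y, f x y = z → 1 - ε ≤ rcov w x y) ∧
    (∀ x y, f x y ≠ z → rcov w x y ≤ δ) ∧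
    (∀ x y, rcov w x y ≤ 1) ∧
    v = ∑ R : Finset X × Finset Y, w R }

/-- `srec_{ε,δ}(f) = max_{z ∈ Z} srec^z_{ε,δ}(f)`. -/
def srecGen {X Y Z : Type} [Fintype X] [Fintype Y] [Fintype Z]
    (f : X → Y → Z) (ε δ : ℝ) : ℝ :=
  sSup (Set.range fun z : Z => srecZgen f z ε δ)

/-- Distributional smooth rectangle bound for general output alphabet. -/
def srecZmuGen {X Y Z : Type} [Fintype X] [Fintype Y]
    (μ : X → Y → ℝ) (f : X → Y → Z) (z : Z) (ε δ : ℝ) : ℝ :=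
  sInf { v : ℝ | ∃ w : Finset X × Finset Y → ℝ,
    (∀ R, 0 ≤ w R) ∧
    ((1 - ε) * (∑ x, ∑ y, if f x y = z then μ x y else 0) ≤
      ∑ x, ∑ y, if f x y = z then μ x y * rcov w x y else 0) ∧
    (∀ x y, f x y ≠ z → rcov w x y ≤ δ) ∧
    (∀ x y, rcov w x y ≤ 1) ∧
    v = ∑ R : Finset X × Finset Y, w R }

/-- `srec^μ_{ε,δ}(f) = max_{z ∈ Z} srec^{z,μ}_{ε,δ}(f)`. -/
def srecMuGen {X Y Z : Type} [Fintype X] [Fintype Y] [Fintype Z]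
    (μ : X → Y → ℝ) (f : X → Y → Z) (ε δ : ℝ) : ℝ :=
  sSup (Set.range fun z : Z => srecZmuGen μ f z ε δ)

/-- Partition bound for general output alphabet. -/
def prtGen {X Y Z : Type} [Fintype X] [Fintype Y] [Fintype Z]
    (f : X → Y → Z) (ε : ℝ) : ℝ :=
  sInf { v : ℝ | ∃ w : Z → Finset X × Finset Y → ℝ,
    (∀ z R, 0 ≤ w z R) ∧
    (∀ x y, 1 - ε ≤ rcov (w (f x y)) x y) ∧
    (∀ x y, (∑ z : Z, rcov (w z) x y) = 1) ∧
    v = ∑ z : Z, ∑ R : Finset X × Finset Y, w z R }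

/-! ## Decision trees, subcubes and the query partition bound -/

/-- Deterministic decision trees on `n` input bits. -/
inductive DTree (n : ℕ) : Type
  | leaf : Bool → DTree n
  | node : Fin n → DTree n → DTree n → DTree n

def DTree.eval {n : ℕ} : DTree n → (Fin n → Bool) → Bool
  | .leaf b, _ => b
  | .node i t0 t1, x => if x i then DTree.eval t1 x else DTree.eval t0 x

def DTree.depth {n : ℕ} : DTree n → ℕ
  | .leaf _ => 0
  | .node _ t0 t1 => max (DTree.depth t0) (DTree.depth t1) + 1

/-- Error of a decision tree w.r.t. the input distribution `μ`. -/
def qErr {n : ℕ} (μ : (Fin n → Bool) → ℝ) (g : (Fin n → Bool) → Bool) (T : DTree n) : ℝ :=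
  ∑ x, if T.eval x ≠ g x then μ x else 0

/-- Distributional query complexity `QC^μ_ε(g)`: minimum depth of a deterministic decision
tree erring with probability at most `ε` under `μ`. -/
def QCdist {n : ℕ} (μ : (Fin n → Bool) → ℝ) (g : (Fin n → Bool) → Bool) (ε : ℝ) : ℕ :=
  sInf {d : ℕ | ∃ T : DTree n, T.depth ≤ d ∧ qErr μ g T ≤ ε}

/-- A subcube of `{0,1}ⁿ`, given by its support pattern `s ∈ {0,1,⋆}ⁿ`. -/
abbrev Subcube (n : ℕ) := Fin n → Option Bool

/-- Membership in a subcube. -/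
def memCube {n : ℕ} (A : Subcube n) (x : Fin n → Bool) : Prop :=
  ∀ i, ∀ b, A i = some b → x i = b

/-- Size of (the support of) a subcube. -/
def cubeSize {n : ℕ} (A : Subcube n) : ℕ :=
  (Finset.univ.filter fun i => (A i).isSome).card

/-- Total weight of subcubes containing `x`. -/
def cubeCov {n : ℕ} (w : Subcube n → ℝ) (x : Fin n → Bool) : ℝ :=
  ∑ A : Subcube n, if memCube A x then w A else 0

/-- Query partition bound `qprt_ε(g)` (LP optimal value). -/
def qprt {n : ℕ} (g : (Fin n → Bool) → Bool) (ε : ℝ) : ℝ :=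
  sInf { v : ℝ | ∃ w : Bool → Subcube n → ℝ,
    (∀ z A, 0 ≤ w z A) ∧
    (∀ x, 1 - ε ≤ cubeCov (w (g x)) x) ∧
    (∀ x, cubeCov (w false) x + cubeCov (w true) x = 1) ∧
    v = ∑ A : Subcube n, (w false A + w true A) * 2 ^ cubeSize A }

/-- The bit-wise product distribution on `{0,1}ⁿ` with `p_i(1) = p i`, `p_i(0) = 1 - p i`. -/
def bitProd {n : ℕ} (p : Fin n → ℝ) : (Fin n → Bool) → ℝ :=
  fun x => ∏ i, if x i then p i else 1 - p i

/-- `μ(A)` for a subcube (or any set given by a membership predicate). -/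
def cubeMass {n : ℕ} (μ : (Fin n → Bool) → ℝ) (A : Subcube n) : ℝ :=
  ∑ x, if memCube A x then μ x else 0

/-- `μ_z(A) = μ(A ∩ g⁻¹(z))` for a subcube `A`. -/
def cubeMassZ {n : ℕ} (μ : (Fin n → Bool) → ℝ) (g : (Fin n → Bool) → Bool)
    (z : Bool) (A : Subcube n) : ℝ :=
  ∑ x, if memCube A x ∧ g x = z then μ x else 0

/-- `μ_z = μ(g⁻¹(z))`. -/
def qTotalZ {n : ℕ} (μ : (Fin n → Bool) → ℝ) (g : (Fin n → Bool) → Bool) (z : Bool) : ℝ :=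
  ∑ x, if g x = z then μ x else 0

/-- Mass of a finite set of pairs under the product measure `μA ⊗ μB`. -/
def pairMass {X Y : Type} (μA : X → ℝ) (μB : Y → ℝ) (A : Finset (X × Y)) : ℝ :=
  ∑ q ∈ A, μA q.1 * μB q.2

end

namespace Protocol

/-- Some subtree of a protocol has between `t / 2` and `t` leaves, and can be split off. -/
theorem exists_split {X Y : Type} (t : ℕ) (ht : 1 ≤ t) (P : Protocol X Y)
    (hP : t < P.leavesCount) :
    ∃ (p : X → Bool) (q : Y → Bool) (P₁ P₂ : Protocol X Y),
      (∀ x y, P.eval x y = if p x && q y then P₁.eval x y else P₂.eval x y) ∧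
      P₁.leavesCount + P₂.leavesCount = P.leavesCount ∧
      P₁.leavesCount ≤ t ∧ t < 2 * P₁.leavesCount := by
  induction P with
  | leaf b => simp only [leavesCount] at hP; omega
  | nodeA g t0 t1 ih0 ih1 =>
    simp only [leavesCount] at hP
    rcases le_total t0.leavesCount t1.leavesCount with h | h
    · by_cases h1 : t1.leavesCount ≤ t
      · refine ⟨g, fun _ => true, t1, t0, fun x y => by simp [eval], ?_, h1, by omega⟩
        simp only [leavesCount]; omega
      · obtain ⟨p, q, P₁, P₂, he, hs, hl, hu⟩ := ih1 (by omega)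
        refine ⟨fun x => g x && p x, q, P₁, nodeA g t0 P₂, fun x y => ?_, ?_, hl, hu⟩
        · cases hg : g x <;> simp [eval, hg, he]
        · simp only [leavesCount]; omega
    · by_cases h1 : t0.leavesCount ≤ t
      · refine ⟨fun x => !g x, fun _ => true, t0, t1, fun x y => ?_, ?_, h1, by omega⟩
        · cases hg : g x <;> simp [eval, hg]
        · simp only [leavesCount]
      · obtain ⟨p, q, P₁, P₂, he, hs, hl, hu⟩ := ih0 (by omega)
        refine ⟨fun x => !g x && p x, q, P₁, nodeA g P₂ t1, fun x y => ?_, ?_, hl, hu⟩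
        · cases hg : g x <;> simp [eval, hg, he]
        · simp only [leavesCount]; omega
  | nodeB g t0 t1 ih0 ih1 =>
    simp only [leavesCount] at hP
    rcases le_total t0.leavesCount t1.leavesCount with h | h
    · by_cases h1 : t1.leavesCount ≤ t
      · refine ⟨fun _ => true, g, t1, t0, fun x y => by simp [eval], ?_, h1, by omega⟩
        simp only [leavesCount]; omega
      · obtain ⟨p, q, P₁, P₂, he, hs, hl, hu⟩ := ih1 (by omega)
        refine ⟨p, fun y => g y && q y, P₁, nodeB g t0 P₂, fun x y => ?_, ?_, hl, hu⟩
        · cases hg : g y <;> simp [eval, hg, he]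
        · simp only [leavesCount]; omega
    · by_cases h1 : t0.leavesCount ≤ t
      · refine ⟨fun _ => true, fun y => !g y, t0, t1, fun x y => ?_, ?_, h1, by omega⟩
        · cases hg : g y <;> simp [eval, hg]
        · simp only [leavesCount]
      · obtain ⟨p, q, P₁, P₂, he, hs, hl, hu⟩ := ih0 (by omega)
        refine ⟨p, fun y => !g y && q y, P₁, nodeB g P₂ t1, fun x y => ?_, ?_, hl, hu⟩
        · cases hg : g y <;> simp [eval, hg, he]
        · simp only [leavesCount]; omega

theorem leavesCount_pos {X Y : Type} (P : Protocol X Y) : 0 < P.leavesCount := by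
  induction P <;> simp_all [leavesCount]

/-- Balancing: a protocol with few leaves is equivalent to one of logarithmic depth. -/
theorem exists_balanced {X Y : Type} (k : ℕ) (P : Protocol X Y)
    (hP : 3 ^ k * P.leavesCount ≤ 4 ^ k) :
    ∃ P' : Protocol X Y, P'.depth ≤ 2 * k ∧ ∀ x y, P'.eval x y = P.eval x y := by
  induction k generalizing P with
  | zero =>
    cases P with
    | leaf b => exact ⟨leaf b, by simp [depth], fun _ _ => rfl⟩
    | nodeA g t0 t1 =>
      have h0 := t0.leavesCount_pos
      have h1 := t1.leavesCount_pos
      simp only [leavesCount] at hP; omega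
    | nodeB g t0 t1 =>
      have h0 := t0.leavesCount_pos
      have h1 := t1.leavesCount_pos
      simp only [leavesCount] at hP; omega
  | succ k ih =>
    by_cases h1 : P.leavesCount ≤ 1
    · obtain ⟨P', hd, he⟩ := ih P (by
        calc 3 ^ k * P.leavesCount ≤ 3 ^ k * 1 := Nat.mul_le_mul_left _ h1
          _ ≤ 4 ^ k := by simpa using Nat.pow_le_pow_left (by norm_num : 3 ≤ 4) k)
      exact ⟨P', by omega, he⟩
    · obtain ⟨p, q, P₁, P₂, he, hs, hl, hu⟩ :=
        exists_split (P.leavesCount / 2) (by omega) P (by omega)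
      have small : ∀ P' : Protocol X Y, 4 * P'.leavesCount ≤ 3 * P.leavesCount →
          3 ^ k * P'.leavesCount ≤ 4 ^ k := by
        intro P' h
        have h2 := Nat.mul_le_mul_left (3 ^ k) h
        rw [pow_succ, pow_succ] at hP
        nlinarith
      obtain ⟨Q₁, hd₁, he₁⟩ := ih P₁ (small _ (by omega))
      obtain ⟨Q₂, hd₂, he₂⟩ := ih P₂ (small _ (by omega))
      refine ⟨nodeA p Q₂ (nodeB q Q₂ Q₁), ?_, fun x y => ?_⟩
      · simp only [depth]; omega
      · rw [he]
        cases hp : p x <;> cases hq : q y <;> simp [eval, hp, hq, he₁, he₂]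

end Protocol

section Covers

variable {X Y ι : Type} [Fintype ι]

/-- Total `w`-weight of the rectangles `S i × T i` containing `(x, y)`. -/
noncomputable def famCov (S : ι → Finset X) (T : ι → Finset Y) (w : ι → ℝ) (x : X) (y : Y) : ℝ :=
  ∑ i, if x ∈ S i ∧ y ∈ T i then w i else 0

theorem famCov_nonneg {S : ι → Finset X} {T : ι → Finset Y} {w : ι → ℝ} (hw : ∀ i, 0 ≤ w i)
    (x : X) (y : Y) : 0 ≤ famCov S T w x y :=
  Finset.sum_nonneg fun i _ => by split_ifs <;> simp [hw]

theorem famCov_mono {S : ι → Finset X} {T : ι → Finset Y} {u w : ι → ℝ} (h : ∀ i, u i ≤ w i)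
    (x : X) (y : Y) : famCov S T u x y ≤ famCov S T w x y :=
  Finset.sum_le_sum fun i _ => by split_ifs <;> simp [h]

theorem famCov_le_sum {S : ι → Finset X} {T : ι → Finset Y} {w : ι → ℝ} (hw : ∀ i, 0 ≤ w i)
    (x : X) (y : Y) : famCov S T w x y ≤ ∑ i, w i :=
  Finset.sum_le_sum fun i _ => by split_ifs <;> simp [hw]

/-- Summing the mass of the members of a family over `A × B` amounts to integrating the
coverage. -/
theorem sum_mul_sum_filter_eq (S : ι → Finset X) (T : ι → Finset Y) (w : ι → ℝ)
    (A : Finset X) (B : Finset Y) (g : X → Y → ℝ) :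
    ∑ i, w i * ∑ x ∈ A with x ∈ S i, ∑ y ∈ B with y ∈ T i, g x y =
      ∑ x ∈ A, ∑ y ∈ B, famCov S T w x y * g x y := by
  simp only [famCov, Finset.sum_mul, Finset.mul_sum, Finset.sum_filter]
  rw [Finset.sum_comm]
  refine Finset.sum_congr rfl fun x _ => ?_
  rw [Finset.sum_comm (s := B)]
  refine Finset.sum_congr rfl fun i _ => ?_
  by_cases hx : x ∈ S i
  · simp only [hx, if_true, true_and, Finset.mul_sum]
    refine Finset.sum_congr rfl fun y _ => ?_
    split_ifs <;> simp
  · simp [hx]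

/-- If a family covers the `1`-inputs, and `c` is small on average where the family covers,
then some large rectangle has small average `c`. -/
theorem exists_rect_of_cover {μA : X → ℝ} {μB : Y → ℝ} (hA : ∀ x, 0 ≤ μA x)
    (hB : ∀ y, 0 ≤ μB y) (f : X → Y → Bool) (S : ι → Finset X) (T : ι → Finset Y)
    {w : ι → ℝ} (hw : ∀ i, 0 ≤ w i) {W η δ ε : ℝ} (hW : 0 < W) (hη : 0 < η) (hε : 0 < ε)
    (hwW : ∑ i, w i ≤ W) (hδ : 4 * δ ≤ η * ε) {c : X → Y → ℝ}
    (hc0 : ∀ x y, 0 ≤ c x y) (h1 : ∀ x y, f x y = true → 1 / 2 ≤ famCov S T w x y)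
    (hc : ∀ x y, famCov S T w x y * c x y ≤ δ) (A : Finset X) (B : Finset Y)
    (hf : η * ((∑ x ∈ A, μA x) * ∑ y ∈ B, μB y) <
      ∑ x ∈ A, ∑ y ∈ B, if f x y = true then μA x * μB y else 0) :
    ∃ S' ⊆ A, ∃ T' ⊆ B,
      η / (4 * W) * ((∑ x ∈ A, μA x) * ∑ y ∈ B, μB y) ≤
        (∑ x ∈ S', μA x) * ∑ y ∈ T', μB y ∧
      ∑ x ∈ S', ∑ y ∈ T', c x y * (μA x * μB y) ≤
        ε * ((∑ x ∈ S', μA x) * ∑ y ∈ T', μB y) := by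
  set m := (∑ x ∈ A, μA x) * ∑ y ∈ B, μB y with hm
  have hm0 : 0 ≤ m := mul_nonneg (Finset.sum_nonneg fun x _ => hA x)
    (Finset.sum_nonneg fun y _ => hB y)
  have hmass := sum_mul_sum_filter_eq S T w A B fun x y => μA x * μB y
  have hcost := sum_mul_sum_filter_eq S T w A B fun x y => c x y * (μA x * μB y)
  have hmass' : η * m / 2 < ∑ x ∈ A, ∑ y ∈ B, famCov S T w x y * (μA x * μB y) := by
    have : (∑ x ∈ A, ∑ y ∈ B, if f x y = true then μA x * μB y else 0) * (1 / 2) ≤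
        ∑ x ∈ A, ∑ y ∈ B, famCov S T w x y * (μA x * μB y) := by
      simp only [Finset.sum_mul]
      refine Finset.sum_le_sum fun x _ => Finset.sum_le_sum fun y _ => ?_
      have hp := mul_nonneg (hA x) (hB y)
      split_ifs with h
      · nlinarith [h1 x y h]
      · simpa using mul_nonneg (famCov_nonneg hw x y) hp
    linarith
  have hcost' : ∑ x ∈ A, ∑ y ∈ B, famCov S T w x y * (c x y * (μA x * μB y)) ≤ δ * m := by
    rw [hm, Finset.sum_mul_sum, Finset.mul_sum]
    refine Finset.sum_le_sum fun x _ => ?_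
    rw [Finset.mul_sum]
    refine Finset.sum_le_sum fun y _ => ?_
    rw [← mul_assoc]
    exact mul_le_mul_of_nonneg_right (hc x y) (mul_nonneg (hA x) (hB y))
  have hpos : 0 < ∑ i, w i * ((∑ x ∈ A with x ∈ S i, ∑ y ∈ B with y ∈ T i, μA x * μB y) -
      η / (4 * W) * m -
      (∑ x ∈ A with x ∈ S i, ∑ y ∈ B with y ∈ T i, c x y * (μA x * μB y)) / ε) := by
    simp only [mul_sub, Finset.sum_sub_distrib, ← Finset.sum_mul, ← mul_div_assoc,
      ← Finset.sum_div, hmass, hcost]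
    have e1 : (∑ i, w i) * (η / (4 * W) * m) ≤ η * m / 4 :=
      calc _ ≤ W * (η / (4 * W) * m) := mul_le_mul_of_nonneg_right hwW (by positivity)
        _ = _ := by field_simp
    have e2 : (∑ x ∈ A, ∑ y ∈ B, famCov S T w x y * (c x y * (μA x * μB y))) / ε
        ≤ η * m / 4 := by
      rw [div_le_iff₀ hε]
      nlinarith
    linarith
  obtain ⟨i, -, hi⟩ := Finset.exists_lt_of_sum_lt
    (by simpa using hpos : ∑ _i : ι, (0 : ℝ) < _)
  have hi' := pos_of_mul_pos_right hi (hw i)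
  have hD : 0 ≤ (η / (4 * W)) * m := by positivity
  refine ⟨A.filter (· ∈ S i), Finset.filter_subset _ _, B.filter (· ∈ T i),
    Finset.filter_subset _ _, ?_, ?_⟩
  all_goals rw [Finset.sum_mul_sum]
  · have : 0 ≤ (∑ x ∈ A with x ∈ S i, ∑ y ∈ B with y ∈ T i, c x y * (μA x * μB y)) / ε :=
      div_nonneg (Finset.sum_nonneg fun x _ => Finset.sum_nonneg fun y _ =>
        mul_nonneg (hc0 x y) (mul_nonneg (hA x) (hB y))) hε.le
    linarith
  · rw [← div_le_iff₀' hε]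
    linarith

theorem famCov_sub (S : ι → Finset X) (T : ι → Finset Y) (u w : ι → ℝ) (x : X) (y : Y) :
    famCov S T (fun i => u i - w i) x y = famCov S T u x y - famCov S T w x y := by
  simp only [famCov, ← Finset.sum_sub_distrib]
  exact Finset.sum_congr rfl fun i _ => by split_ifs <;> simp

/-- The relative sizes of the `i`-th rectangle are `s i / a` inside the rows `S`, `t i / b`
inside the columns `T`, `g i / p` inside all rows and `h i / q` inside all columns. If the family
hardly covers `S × T`, then those members whose relative row size drops more than their relative
column size when passing to `S × T` contribute little to the coverage of `S × B`. -/
theorem sum_mul_le_of_cross_le {u s t g h : ι → ℝ} {a b p q τ : ℝ} (D : Finset ι)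
    (hu : ∀ i, 0 ≤ u i) (hs : ∀ i, 0 ≤ s i) (ht : ∀ i, 0 ≤ t i) (hg : ∀ i, 0 ≤ g i)
    (hh : ∀ i, 0 ≤ h i) (hb : 0 < b) (ha : 0 < a) (hp : 0 < p) (hq : 0 < q) (hτ : 0 < τ)
    (hlow : ∑ i, u i * (s i * t i) ≤ τ ^ 2 * (a * b)) (hle : ∑ i, u i * (g i * h i) ≤ p * q)
    (hD : ∀ i ∈ D, s i * h i * (p * b) ≤ t i * g i * (q * a)) :
    ∑ i ∈ D, u i * (s i * h i) ≤ τ * (a * q) := by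
  have key : ∀ i ∈ D, u i * (s i * h i) ≤
      q / (2 * b * τ) * (u i * (s i * t i)) + τ * a / (2 * p) * (u i * (g i * h i)) := by
    intro i hi
    have hsh : 0 ≤ s i * h i := mul_nonneg (hs i) (hh i)
    have h2 : s i * h i ≤ q / (2 * b * τ) * (s i * t i) + τ * a / (2 * p) * (g i * h i) := by
      have n1 : 0 ≤ q / (2 * b * τ) * (s i * t i) :=
        mul_nonneg (by positivity) (mul_nonneg (hs i) (ht i))
      have n2 : 0 ≤ τ * a / (2 * p) * (g i * h i) :=
        mul_nonneg (by positivity) (mul_nonneg (hg i) (hh i))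
      refine le_of_sq_le_sq ?_ (add_nonneg n1 n2)
      have e : 4 * (q / (2 * b * τ) * (s i * t i)) * (τ * a / (2 * p) * (g i * h i)) =
          (s i * h i) * (t i * g i * (q * a)) / (p * b) := by
        field_simp
        ring
      have e2 : (s i * h i) ^ 2 ≤ (s i * h i) * (t i * g i * (q * a)) / (p * b) := by
        rw [le_div_iff₀ (by positivity)]
        nlinarith [mul_le_mul_of_nonneg_left (hD i hi) hsh]
      nlinarith [sq_nonneg (q / (2 * b * τ) * (s i * t i) - τ * a / (2 * p) * (g i * h i))]
    calc u i * (s i * h i) ≤ u i * _ := mul_le_mul_of_nonneg_left h2 (hu i)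
      _ = _ := by ring
  calc ∑ i ∈ D, u i * (s i * h i) ≤ ∑ i ∈ D, (q / (2 * b * τ) * (u i * (s i * t i)) +
        τ * a / (2 * p) * (u i * (g i * h i))) := Finset.sum_le_sum key
    _ ≤ ∑ i, (q / (2 * b * τ) * (u i * (s i * t i)) +
        τ * a / (2 * p) * (u i * (g i * h i))) := by
      refine Finset.sum_le_sum_of_subset_of_nonneg (Finset.subset_univ _) fun i _ _ =>
        add_nonneg (mul_nonneg (by positivity) ?_) (mul_nonneg (by positivity) ?_)
      · exact mul_nonneg (hu i) (mul_nonneg (hs i) (ht i))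
      · exact mul_nonneg (hu i) (mul_nonneg (hg i) (hh i))
    _ ≤ q / (2 * b * τ) * (τ ^ 2 * (a * b)) + τ * a / (2 * p) * (p * q) := by
      rw [Finset.sum_add_distrib, ← Finset.mul_sum, ← Finset.mul_sum]
      gcongr
    _ = τ * (a * q) := by
      field_simp
      ring

/-- If a family hardly covers `S' × T'`, then half of its weight can be discarded with little
loss of coverage on either `S' × B` or `A × T'`. -/
theorem exists_half_family {μA : X → ℝ} {μB : Y → ℝ} (hA : ∀ x, 0 ≤ μA x)
    (hB : ∀ y, 0 ≤ μB y) (S : ι → Finset X) (T : ι → Finset Y)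
    {u : ι → ℝ} (hu : ∀ i, 0 ≤ u i) {τ : ℝ} (hτ : 0 < τ)
    (hu1 : ∀ x y, famCov S T u x y ≤ 1) {A S' : Finset X} {B T' : Finset Y}
    (hSA : S' ⊆ A) (hTB : T' ⊆ B) (hS : 0 < ∑ x ∈ S', μA x) (hT : 0 < ∑ y ∈ T', μB y)
    (hlow : ∑ x ∈ S', ∑ y ∈ T', famCov S T u x y * (μA x * μB y) ≤
        τ ^ 2 * ((∑ x ∈ S', μA x) * ∑ y ∈ T', μB y)) :
    ∃ v : ι → ℝ, (∀ i, 0 ≤ v i) ∧ (∀ i, v i ≤ u i) ∧ 2 * ∑ i, v i ≤ ∑ i, u i ∧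
      (∑ x ∈ S', ∑ y ∈ B, (famCov S T u x y - famCov S T v x y) * (μA x * μB y) ≤
          τ * ((∑ x ∈ S', μA x) * ∑ y ∈ B, μB y) ∨
       ∑ x ∈ A, ∑ y ∈ T', (famCov S T u x y - famCov S T v x y) * (μA x * μB y) ≤
          τ * ((∑ x ∈ A, μA x) * ∑ y ∈ T', μB y)) := by
  have hAp : 0 < ∑ x ∈ A, μA x :=
    hS.trans_le (Finset.sum_le_sum_of_subset_of_nonneg hSA fun x _ _ => hA x)
  have hBp : 0 < ∑ y ∈ B, μB y :=
    hT.trans_le (Finset.sum_le_sum_of_subset_of_nonneg hTB fun y _ _ => hB y)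
  have hcov (w : ι → ℝ) (A : Finset X) (B : Finset Y) :
      ∑ x ∈ A, ∑ y ∈ B, famCov S T w x y * (μA x * μB y) =
        ∑ i, w i * ((∑ x ∈ A with x ∈ S i, μA x) * ∑ y ∈ B with y ∈ T i, μB y) := by
    simp only [← sum_mul_sum_filter_eq, Finset.sum_mul_sum]
  have hle : ∑ i, u i * ((∑ x ∈ A with x ∈ S i, μA x) * ∑ y ∈ B with y ∈ T i, μB y) ≤
      (∑ x ∈ A, μA x) * ∑ y ∈ B, μB y := by
    rw [← hcov, Finset.sum_mul_sum]
    refine Finset.sum_le_sum fun x _ => Finset.sum_le_sum fun y _ => ?_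
    have := mul_nonneg (hA x) (hB y)
    nlinarith [hu1 x y]
  have nA (A : Finset X) (i : ι) : 0 ≤ ∑ x ∈ A with x ∈ S i, μA x :=
    Finset.sum_nonneg fun x _ => hA x
  have nB (B : Finset Y) (i : ι) : 0 ≤ ∑ y ∈ B with y ∈ T i, μB y :=
    Finset.sum_nonneg fun y _ => hB y
  rw [hcov] at hlow
  set G : Finset ι := {i | (∑ x ∈ S' with x ∈ S i, μA x) * (∑ y ∈ B with y ∈ T i, μB y) *
    ((∑ x ∈ A, μA x) * ∑ y ∈ T', μB y) ≤ (∑ y ∈ T' with y ∈ T i, μB y) *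
    (∑ x ∈ A with x ∈ S i, μA x) * ((∑ y ∈ B, μB y) * ∑ x ∈ S', μA x)} with hG
  have hsplit : ∑ i, (if i ∈ G then u i else 0) + ∑ i, (if i ∈ G then 0 else u i) =
      ∑ i, u i := by
    rw [← Finset.sum_add_distrib]
    exact Finset.sum_congr rfl fun i _ => by split_ifs <;> simp
  simp only [← famCov_sub, hcov]
  by_cases hhalf : 2 * ∑ i, (if i ∈ G then 0 else u i) ≤ ∑ i, u i
  · refine ⟨fun i => if i ∈ G then 0 else u i, fun i => by dsimp only; split_ifs <;> simp [hu],
      fun i => by dsimp only; split_ifs <;> simp [hu], hhalf, Or.inl ?_⟩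
    refine le_trans (le_of_eq ?_) (sum_mul_le_of_cross_le G hu (nA S') (nB T') (nA A) (nB B)
      hT hS hAp hBp hτ hlow hle fun i hi => by simpa [hG] using hi)
    rw [← Finset.univ_inter G, ← Finset.sum_ite_mem]
    refine Finset.sum_congr rfl fun i _ => ?_
    by_cases hi : i ∈ G <;> simp [hi]
  · refine ⟨fun i => if i ∈ G then u i else 0, fun i => by dsimp only; split_ifs <;> simp [hu],
      fun i => by dsimp only; split_ifs <;> simp [hu], by linarith, Or.inr ?_⟩
    have := sum_mul_le_of_cross_le Gᶜ hu (nB T') (nA S') (nB B) (nA A) hS hT hBp hAp hτ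
      (by simpa only [mul_comm] using hlow) (by simpa only [mul_comm] using hle)
      fun i hi => by
        have : i ∉ G := by simpa using hi
        rw [hG, Finset.mem_filter] at this
        exact le_of_not_ge (by simpa using this)
    rw [mul_comm (∑ x ∈ A, μA x)]
    refine le_trans (le_of_eq ?_) this
    rw [← Finset.univ_inter Gᶜ, ← Finset.sum_ite_mem]
    refine Finset.sum_congr rfl fun i _ => ?_
    by_cases hi : i ∈ G <;> simp [hi, mul_comm]

/-- Mass of the inputs in `A × B` on which the protocol errs. -/
noncomputable def rectErr (μA : X → ℝ) (μB : Y → ℝ) (f : X → Y → Bool) (P : Protocol X Y)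
    (A : Finset X) (B : Finset Y) : ℝ :=
  ∑ x ∈ A, ∑ y ∈ B, if P.eval x y ≠ f x y then μA x * μB y else 0

/-- Uncovered mass of the `0`-inputs in `A × B`, for the fractional coverage `c`. -/
noncomputable def uncovMass (μA : X → ℝ) (μB : Y → ℝ) (f : X → Y → Bool) (c : X → Y → ℝ)
    (A : Finset X) (B : Finset Y) : ℝ :=
  ∑ x ∈ A, ∑ y ∈ B, if f x y = false then (1 - c x y) * (μA x * μB y) else 0

theorem rectErr_congr {μA : X → ℝ} {μB : Y → ℝ} {f : X → Y → Bool} {P Q : Protocol X Y}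
    {A : Finset X} {B : Finset Y} (h : ∀ x ∈ A, ∀ y ∈ B, P.eval x y = Q.eval x y) :
    rectErr μA μB f P A B = rectErr μA μB f Q A B :=
  Finset.sum_congr rfl fun x hx => Finset.sum_congr rfl fun y hy => by rw [h x hx y hy]

theorem rectErr_le {μA : X → ℝ} {μB : Y → ℝ} (hA : ∀ x, 0 ≤ μA x)
    (hB : ∀ y, 0 ≤ μB y) (f : X → Y → Bool) (P : Protocol X Y) (A : Finset X) (B : Finset Y) :
    rectErr μA μB f P A B ≤ (∑ x ∈ A, μA x) * ∑ y ∈ B, μB y := by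
  rw [Finset.sum_mul_sum]
  refine Finset.sum_le_sum fun x _ => Finset.sum_le_sum fun y _ => ?_
  split_ifs
  · exact le_rfl
  · exact mul_nonneg (hA x) (hB y)

theorem rectErr_nodeA {μA : X → ℝ} {μB : Y → ℝ} {f : X → Y → Bool} {A S : Finset X}
    (hS : S ⊆ A) (P Q : Protocol X Y) (B : Finset Y) :
    rectErr μA μB f (.nodeA (fun x => decide (x ∈ S)) P Q) A B =
      rectErr μA μB f P (A \ S) B + rectErr μA μB f Q S B := by
  rw [rectErr, ← Finset.sum_sdiff hS]
  refine congrArg₂ _ (rectErr_congr fun x hx y _ => ?_) (rectErr_congr fun x hx y _ => ?_)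
  · simp [Protocol.eval, (Finset.mem_sdiff.1 hx).2]
  · simp [Protocol.eval, hx]

theorem rectErr_nodeB {μA : X → ℝ} {μB : Y → ℝ} {f : X → Y → Bool} {B T : Finset Y}
    (hT : T ⊆ B) (P Q : Protocol X Y) (A : Finset X) :
    rectErr μA μB f (.nodeB (fun y => decide (y ∈ T)) P Q) A B =
      rectErr μA μB f P A (B \ T) + rectErr μA μB f Q A T := by
  simp only [rectErr, ← Finset.sum_add_distrib]
  refine Finset.sum_congr rfl fun x _ => ?_
  rw [← Finset.sum_sdiff hT]
  refine congrArg₂ _ (Finset.sum_congr rfl fun y hy => ?_) (Finset.sum_congr rfl fun y hy => ?_)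
  · simp [Protocol.eval, (Finset.mem_sdiff.1 hy).2]
  · simp [Protocol.eval, hy]

theorem uncovMass_sdiff_left {μA : X → ℝ} {μB : Y → ℝ} {f : X → Y → Bool} {c : X → Y → ℝ}
    {A S : Finset X} (hS : S ⊆ A) (B : Finset Y) :
    uncovMass μA μB f c (A \ S) B + uncovMass μA μB f c S B = uncovMass μA μB f c A B :=
  Finset.sum_sdiff hS

theorem uncovMass_sdiff_right {μA : X → ℝ} {μB : Y → ℝ} {f : X → Y → Bool} {c : X → Y → ℝ}
    {B T : Finset Y} (hT : T ⊆ B) (A : Finset X) :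
    uncovMass μA μB f c A (B \ T) + uncovMass μA μB f c A T = uncovMass μA μB f c A B := by
  simp only [uncovMass, ← Finset.sum_add_distrib]
  exact Finset.sum_congr rfl fun x _ => Finset.sum_sdiff hT

theorem uncovMass_nonneg {μA : X → ℝ} {μB : Y → ℝ} (hA : ∀ x, 0 ≤ μA x)
    (hB : ∀ y, 0 ≤ μB y) (f : X → Y → Bool) {c : X → Y → ℝ} (hc : ∀ x y, c x y ≤ 1)
    (A : Finset X) (B : Finset Y) : 0 ≤ uncovMass μA μB f c A B :=
  Finset.sum_nonneg fun x _ => Finset.sum_nonneg fun y _ => by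
    split_ifs
    · exact mul_nonneg (sub_nonneg.2 (hc x y)) (mul_nonneg (hA x) (hB y))
    · exact le_rfl

theorem uncovMass_le_add {μA : X → ℝ} {μB : Y → ℝ} (hA : ∀ x, 0 ≤ μA x)
    (hB : ∀ y, 0 ≤ μB y) (f : X → Y → Bool) {c d : X → Y → ℝ} (h : ∀ x y, d x y ≤ c x y)
    (A : Finset X) (B : Finset Y) :
    uncovMass μA μB f d A B ≤ uncovMass μA μB f c A B +
      ∑ x ∈ A, ∑ y ∈ B, (c x y - d x y) * (μA x * μB y) := by
  simp only [uncovMass, ← Finset.sum_add_distrib]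
  refine Finset.sum_le_sum fun x _ => Finset.sum_le_sum fun y _ => ?_
  split_ifs
  · linarith
  · simpa using mul_nonneg (sub_nonneg.2 (h x y)) (mul_nonneg (hA x) (hB y))

/-- Answering `1` is good wherever the coverage of the `0`-inputs is at most `1 / 2`. -/
theorem rectErr_leaf_true_le {μA : X → ℝ} {μB : Y → ℝ} (hA : ∀ x, 0 ≤ μA x)
    (hB : ∀ y, 0 ≤ μB y) (f : X → Y → Bool) {c : X → Y → ℝ} (hc : ∀ x y, c x y ≤ 1 / 2)
    (A : Finset X) (B : Finset Y) :
    rectErr μA μB f (.leaf true) A B ≤ 2 * uncovMass μA μB f c A B := by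
  simp only [uncovMass, rectErr, Finset.mul_sum, Protocol.eval]
  refine Finset.sum_le_sum fun x _ => Finset.sum_le_sum fun y _ => ?_
  have := mul_nonneg (hA x) (hB y)
  cases h : f x y
  · simp only [ne_eq, reduceCtorEq, not_false_eq_true, if_true]
    nlinarith [hc x y]
  · simp

/-- Setting of the recursive protocol: over a product measure, `w₁` covers the `1`-inputs and
is nearly disjoint from `w₀`. The error coefficient grows with the logarithm of the weight of a
subfamily `u` of `w₀`, and so does the logarithm of the number of leaves. -/
theorem exists_protocol_of_covers {μA : X → ℝ} {μB : Y → ℝ} (hA : ∀ x, 0 ≤ μA x)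
    (hB : ∀ y, 0 ≤ μB y) (f : X → Y → Bool) (S : ι → Finset X) (T : ι → Finset Y)
    {w₀ w₁ : ι → ℝ} (hw₁ : ∀ i, 0 ≤ w₁ i) {W η δ τ : ℝ} (hW : 0 < W)
    (hη : 0 < η) (hτ : 0 < τ) (hw₁W : ∑ i, w₁ i ≤ W) (hδ : 4 * δ ≤ η * τ ^ 2)
    (h0 : ∀ x y, famCov S T w₀ x y ≤ 1)
    (h1 : ∀ x y, f x y = true → 1 / 2 ≤ famCov S T w₁ x y)
    (h01 : ∀ x y, famCov S T w₁ x y * famCov S T w₀ x y ≤ δ)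
    (hσ : η / (4 * W) ≤ 1) (N : ℕ) (j : ℕ) :
    ∀ (A : Finset X) (B : Finset Y) (u : ι → ℝ), (∀ i, 0 ≤ u i) → (∀ i, u i ≤ w₀ i) →
      2 * ∑ i, u i ≤ 2 ^ j →
      ∃ P : Protocol X Y, P.leavesCount ≤ (N + 1) ^ j ∧
        rectErr μA μB f P A B ≤ 2 * uncovMass μA μB f (famCov S T u) A B +
          (η + j * (2 * τ + (1 - η / (4 * W)) ^ N)) * ((∑ x ∈ A, μA x) * ∑ y ∈ B, μB y) := by
  set σ := η / (4 * W) with hσdef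
  have hσ0 : 0 ≤ 1 - σ := sub_nonneg.2 hσ
  have mA (A : Finset X) : 0 ≤ ∑ x ∈ A, μA x := Finset.sum_nonneg fun x _ => hA x
  have mB (B : Finset Y) : 0 ≤ ∑ y ∈ B, μB y := Finset.sum_nonneg fun y _ => hB y
  induction j with
  | zero =>
    intro A B u hu _ hsum
    refine ⟨.leaf true, by simp [Protocol.leavesCount], ?_⟩
    have := rectErr_leaf_true_le hA hB f (c := famCov S T u)
      (fun x y => (famCov_le_sum hu x y).trans (by norm_num at hsum ⊢; linarith)) A B
    have := mul_nonneg hη.le (mul_nonneg (mA A) (mB B))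
    norm_num
    linarith
  | succ j ih =>
    set e : ℝ := η + j * (2 * τ + (1 - σ) ^ N) with he
    have he0 : η ≤ e := by rw [he]; simp; positivity
    suffices H : ∀ M : ℕ, ∀ (A : Finset X) (B : Finset Y) (u : ι → ℝ), (∀ i, 0 ≤ u i) →
        (∀ i, u i ≤ w₀ i) → 2 * ∑ i, u i ≤ 2 ^ (j + 1) →
        ∃ P : Protocol X Y, P.leavesCount ≤ M * (N + 1) ^ j + 1 ∧
          rectErr μA μB f P A B ≤ 2 * uncovMass μA μB f (famCov S T u) A B +
            (e + 2 * τ + (1 - σ) ^ M) * ((∑ x ∈ A, μA x) * ∑ y ∈ B, μB y) by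
      intro A B u hu hu0 hsum
      obtain ⟨P, hP, hPe⟩ := H N A B u hu hu0 hsum
      refine ⟨P, hP.trans ?_, hPe.trans (le_of_eq ?_)⟩
      · have := Nat.one_le_pow j (N + 1) (by omega)
        rw [pow_succ]
        nlinarith
      · rw [he]; push_cast; ring
    intro M
    induction M with
    | zero =>
      intro A B u hu hu0 _
      refine ⟨.leaf true, by simp [Protocol.leavesCount], ?_⟩
      have h2 := rectErr_le hA hB f (.leaf true) A B
      have h3 := uncovMass_nonneg hA hB f
        (fun x y => (famCov_mono hu0 x y).trans (h0 x y)) A B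
      have h4 : 0 ≤ (e + 2 * τ) * ((∑ x ∈ A, μA x) * ∑ y ∈ B, μB y) :=
        mul_nonneg (by linarith) (mul_nonneg (mA A) (mB B))
      simp only [pow_zero]
      linarith
    | succ M ihM =>
      intro A B u hu hu0 hsum
      have hu1 x y : famCov S T u x y ≤ 1 := (famCov_mono hu0 x y).trans (h0 x y)
      by_cases hf : ∑ x ∈ A, ∑ y ∈ B, (if f x y = true then μA x * μB y else 0) ≤
          η * ((∑ x ∈ A, μA x) * ∑ y ∈ B, μB y)
      · refine ⟨.leaf false, by simp [Protocol.leavesCount], ?_⟩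
        have h2 : rectErr μA μB f (.leaf false) A B =
            ∑ x ∈ A, ∑ y ∈ B, (if f x y = true then μA x * μB y else 0) := by
          refine Finset.sum_congr rfl fun x _ => Finset.sum_congr rfl fun y _ => ?_
          cases h : f x y <;> simp [Protocol.eval]
        have h3 := uncovMass_nonneg hA hB f hu1 A B
        have h4 : η * ((∑ x ∈ A, μA x) * ∑ y ∈ B, μB y) ≤
            (e + 2 * τ + (1 - σ) ^ (M + 1)) * ((∑ x ∈ A, μA x) * ∑ y ∈ B, μB y) := by
          refine mul_le_mul_of_nonneg_right ?_ (mul_nonneg (mA A) (mB B))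
          have := pow_nonneg hσ0 (M + 1)
          linarith
        linarith
      have h01' x y : famCov S T w₁ x y * famCov S T u x y ≤ δ :=
        (mul_le_mul_of_nonneg_left (famCov_mono hu0 x y) (famCov_nonneg hw₁ x y)).trans
          (h01 x y)
      obtain ⟨S', hS', T', hT', hbig, hlow⟩ := exists_rect_of_cover hA hB f S T hw₁ hW hη
        (pow_pos hτ 2) hw₁W hδ (famCov_nonneg hu) h1 h01' A B (not_le.1 hf)
      have hm : 0 < (∑ x ∈ A, μA x) * ∑ y ∈ B, μB y := by
        refine (mul_nonneg (mA A) (mB B)).lt_of_ne fun h => hf ?_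
        refine le_trans ?_ (by rw [← h, mul_zero, h] :
          (∑ x ∈ A, μA x) * ∑ y ∈ B, μB y ≤ η * ((∑ x ∈ A, μA x) * ∑ y ∈ B, μB y))
        rw [Finset.sum_mul_sum]
        refine Finset.sum_le_sum fun x _ => Finset.sum_le_sum fun y _ => ?_
        split_ifs
        · exact le_rfl
        · exact mul_nonneg (hA x) (hB y)
      have hST : 0 < (∑ x ∈ S', μA x) * ∑ y ∈ T', μB y :=
        lt_of_lt_of_le (by positivity) hbig
      have hA0 : 0 < ∑ x ∈ A, μA x := pos_of_mul_pos_left hm (mB B)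
      have hB0 : 0 < ∑ y ∈ B, μB y := pos_of_mul_pos_right hm (mA A)
      have hS0 : 0 < ∑ x ∈ S', μA x := pos_of_mul_pos_left hST (mB T')
      have hT0 : 0 < ∑ y ∈ T', μB y := pos_of_mul_pos_right hST (mA S')
      have hSle : ∑ x ∈ S', μA x ≤ ∑ x ∈ A, μA x :=
        Finset.sum_le_sum_of_subset_of_nonneg hS' fun x _ _ => hA x
      have hTle : ∑ y ∈ T', μB y ≤ ∑ y ∈ B, μB y :=
        Finset.sum_le_sum_of_subset_of_nonneg hT' fun y _ _ => hB y
      have hAsd : ∑ x ∈ A \ S', μA x + ∑ x ∈ S', μA x = ∑ x ∈ A, μA x := Finset.sum_sdiff hS'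
      have hBsd : ∑ y ∈ B \ T', μB y + ∑ y ∈ T', μB y = ∑ y ∈ B, μB y := Finset.sum_sdiff hT'
      have hpM := pow_nonneg hσ0 M
      obtain ⟨v, hv, hvu, hvsum, hor⟩ := exists_half_family hA hB S T hu hτ hu1 hS' hT' hS0 hT0
        hlow
      have hv0 i : v i ≤ w₀ i := (hvu i).trans (hu0 i)
      have hvsum' : 2 * ∑ i, v i ≤ 2 ^ j := by rw [pow_succ] at hsum; linarith
      have hleaf (P Q : Protocol X Y) (hP : P.leavesCount ≤ M * (N + 1) ^ j + 1)
          (hQ : Q.leavesCount ≤ (N + 1) ^ j) :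
          P.leavesCount + Q.leavesCount ≤ (M + 1) * (N + 1) ^ j + 1 := by
        rw [add_mul, one_mul]; omega
      rcases hor with hor | hor
      · obtain ⟨Q, hQ, hQe⟩ := ih S' B v hv hv0 hvsum'
        obtain ⟨P, hP, hPe⟩ := ihM (A \ S') B u hu hu0 hsum
        refine ⟨.nodeA (fun x => decide (x ∈ S')) P Q, hleaf P Q hP hQ, ?_⟩
        rw [rectErr_nodeA hS', ← uncovMass_sdiff_left hS']
        have hadd := uncovMass_le_add hA hB f (famCov_mono (S := S) (T := T) hvu) S' B
        have hshrink : ∑ x ∈ A \ S', μA x ≤ (1 - σ) * ∑ x ∈ A, μA x := by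
          have : σ * ∑ x ∈ A, μA x ≤ ∑ x ∈ S', μA x := by
            refine le_of_mul_le_mul_right ?_ hB0
            calc _ = _ := mul_assoc _ _ _
              _ ≤ _ := hbig
              _ ≤ _ := mul_le_mul_of_nonneg_left hTle hS0.le
          linarith
        have hrest : (1 - σ) ^ M * ((∑ x ∈ A \ S', μA x) * ∑ y ∈ B, μB y) ≤
            (1 - σ) ^ (M + 1) * ((∑ x ∈ A, μA x) * ∑ y ∈ B, μB y) := by
          calc _ ≤ (1 - σ) ^ M * (((1 - σ) * ∑ x ∈ A, μA x) * ∑ y ∈ B, μB y) := by gcongr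
            _ = _ := by ring
        rw [← hAsd] at hrest ⊢
        linarith
      · obtain ⟨Q, hQ, hQe⟩ := ih A T' v hv hv0 hvsum'
        obtain ⟨P, hP, hPe⟩ := ihM A (B \ T') u hu hu0 hsum
        refine ⟨.nodeB (fun y => decide (y ∈ T')) P Q, hleaf P Q hP hQ, ?_⟩
        rw [rectErr_nodeB hT', ← uncovMass_sdiff_right hT']
        have hadd := uncovMass_le_add hA hB f (famCov_mono (S := S) (T := T) hvu) A T'
        have hshrink : ∑ y ∈ B \ T', μB y ≤ (1 - σ) * ∑ y ∈ B, μB y := by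
          have : σ * ∑ y ∈ B, μB y ≤ ∑ y ∈ T', μB y := by
            refine le_of_mul_le_mul_left ?_ hA0
            calc _ = _ := mul_left_comm _ _ _
              _ ≤ _ := hbig
              _ ≤ _ := mul_le_mul_of_nonneg_right hSle hT0.le
          linarith
        have hrest : (1 - σ) ^ M * ((∑ x ∈ A, μA x) * ∑ y ∈ B \ T', μB y) ≤
            (1 - σ) ^ (M + 1) * ((∑ x ∈ A, μA x) * ∑ y ∈ B, μB y) := by
          calc _ ≤ (1 - σ) ^ M * ((∑ x ∈ A, μA x) * ((1 - σ) * ∑ y ∈ B, μB y)) := by gcongr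
            _ = _ := by ring
        rw [← hBsd] at hrest ⊢
        linarith

end Covers

section Amplification

variable {X Y : Type} [Fintype X] [Fintype Y]

/-- The rows common to a tuple of labelled rectangles. -/
noncomputable def tupleRows {m : ℕ} (p : Fin m → Bool × (Finset X × Finset Y)) : Finset X :=
  {x | ∀ i, x ∈ (p i).2.1}

/-- The columns common to a tuple of labelled rectangles. -/
noncomputable def tupleCols {m : ℕ} (p : Fin m → Bool × (Finset X × Finset Y)) : Finset Y :=
  {y | ∀ i, y ∈ (p i).2.2}

/-- Coverage by product weights on tuples is the power of the coverage. -/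
theorem famCov_tuple_prod (m : ℕ) (g : Bool → Finset X × Finset Y → ℝ) (x : X) (y : Y) :
    famCov tupleRows tupleCols (fun p : Fin m → Bool × (Finset X × Finset Y) =>
      ∏ i, g (p i).1 (p i).2) x y = (rcov (g false) x y + rcov (g true) x y) ^ m := by
  have h : rcov (g false) x y + rcov (g true) x y =
      ∑ t : Bool × (Finset X × Finset Y),
        if x ∈ t.2.1 ∧ y ∈ t.2.2 then g t.1 t.2 else 0 := by
    rw [Fintype.sum_prod_type, Fintype.sum_bool, add_comm]
    rfl
  rw [h, Fintype.sum_pow, famCov]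
  refine Finset.sum_congr rfl fun p _ => ?_
  rw [Finset.prod_ite_zero]
  simp only [tupleRows, tupleCols, Finset.mem_filter, Finset.mem_univ, true_and,
    forall_true_left, forall_and]

theorem rcov_const_mul (c : ℝ) (w : Finset X × Finset Y → ℝ) (x : X) (y : Y) :
    rcov (fun R => c * w R) x y = c * rcov w x y := by
  simp only [rcov, Finset.mul_sum, mul_ite, mul_zero]

/-- Chernoff bound: tuples with at least half of their labels equal to an unlikely value `z`
have exponentially small coverage. -/
theorem famCov_majority_le {w : Bool → Finset X × Finset Y → ℝ} (hw : ∀ z R, 0 ≤ w z R)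
    (x : X) (y : Y) (hone : rcov (w false) x y + rcov (w true) x y = 1) (z : Bool)
    (hz : rcov (w z) x y ≤ 1 / 8) (l : ℕ) :
    famCov tupleRows tupleCols (fun p : Fin (2 * l) → Bool × (Finset X × Finset Y) =>
      if l ≤ Finset.card {i | (p i).1 = z} then ∏ i, w (p i).1 (p i).2 else 0) x y ≤
      (1 / 2) ^ l := by
  set g : Bool → Finset X × Finset Y → ℝ := fun b R => (if b = z then 4 else 1) * w b R with hg
  have hbase : rcov (g false) x y + rcov (g true) x y ≤ 11 / 8 := by
    simp only [hg, rcov_const_mul]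
    cases z <;> simp <;> linarith
  have hbase0 : 0 ≤ rcov (g false) x y + rcov (g true) x y := by
    have h b : 0 ≤ rcov (g b) x y := by
      refine Finset.sum_nonneg fun R _ => ?_
      have := hw b R
      simp only [hg]
      split_ifs <;> linarith
    exact add_nonneg (h _) (h _)
  have hprod (p : Fin (2 * l) → Bool × (Finset X × Finset Y)) :
      ∏ i, g (p i).1 (p i).2 =
        4 ^ (Finset.card {i | (p i).1 = z}) * ∏ i, w (p i).1 (p i).2 := by
    simp only [hg, Finset.prod_mul_distrib, Finset.prod_ite, Finset.prod_const, one_pow, mul_one]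
  have h4 : (4 : ℝ) ^ l * famCov tupleRows tupleCols
      (fun p : Fin (2 * l) → Bool × (Finset X × Finset Y) =>
        if l ≤ Finset.card {i | (p i).1 = z} then ∏ i, w (p i).1 (p i).2 else 0) x y ≤
      (rcov (g false) x y + rcov (g true) x y) ^ (2 * l) := by
    rw [← famCov_tuple_prod, famCov, Finset.mul_sum]
    refine Finset.sum_le_sum fun p _ => ?_
    have hnn : 0 ≤ ∏ i, w (p i).1 (p i).2 := Finset.prod_nonneg fun i _ => hw _ _
    simp only [hprod]
    split_ifs with h1 h2
    · exact mul_le_mul_of_nonneg_right (pow_le_pow_right₀ (by norm_num) h2) hnn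
    · rw [mul_zero]
      positivity
    · simp
  have h5 : (rcov (g false) x y + rcov (g true) x y) ^ (2 * l) ≤ (4 : ℝ) ^ l * (1 / 2) ^ l := by
    calc _ ≤ (11 / 8 : ℝ) ^ (2 * l) := pow_le_pow_left₀ hbase0 hbase _
      _ = (121 / 64 : ℝ) ^ l := by rw [pow_mul]; norm_num
      _ ≤ (2 : ℝ) ^ l := pow_le_pow_left₀ (by norm_num) (by norm_num) _
      _ = _ := by rw [← mul_pow]; norm_num
  exact le_of_mul_le_mul_left (h4.trans h5) (by positivity)

/-- Amplification of a feasible solution of the partition bound. -/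
theorem exists_amplified_covers (f : X → Y → Bool) {w : Bool → Finset X × Finset Y → ℝ}
    (hw : ∀ z R, 0 ≤ w z R) (hcov : ∀ x y, 1 - 1 / 8 ≤ rcov (w (f x y)) x y)
    (hone : ∀ x y, rcov (w false) x y + rcov (w true) x y = 1) (l : ℕ) :
    ∃ w₀ w₁ : (Fin (2 * l) → Bool × (Finset X × Finset Y)) → ℝ,
      (∀ p, 0 ≤ w₀ p) ∧ (∀ p, 0 ≤ w₁ p) ∧
      ∑ p, w₀ p + ∑ p, w₁ p = (∑ R, (w false R + w true R)) ^ (2 * l) ∧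
      (∀ x y, famCov tupleRows tupleCols w₀ x y + famCov tupleRows tupleCols w₁ x y = 1) ∧
      (∀ x y, f x y = true → famCov tupleRows tupleCols w₀ x y ≤ (1 / 2) ^ l) ∧
      (∀ x y, f x y = false → famCov tupleRows tupleCols w₁ x y ≤ (1 / 2) ^ l) := by
  have hnn (p : Fin (2 * l) → Bool × (Finset X × Finset Y)) : 0 ≤ ∏ i, w (p i).1 (p i).2 :=
    Finset.prod_nonneg fun i _ => hw _ _
  have hsplit (p : Fin (2 * l) → Bool × (Finset X × Finset Y)) :
      (if l ≤ Finset.card {i | (p i).1 = true} then 0 else ∏ i, w (p i).1 (p i).2) +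
      (if l ≤ Finset.card {i | (p i).1 = true} then ∏ i, w (p i).1 (p i).2 else 0) =
        ∏ i, w (p i).1 (p i).2 := by
    split_ifs <;> simp
  refine ⟨fun p => if l ≤ Finset.card {i | (p i).1 = true} then 0 else ∏ i, w (p i).1 (p i).2,
    fun p => if l ≤ Finset.card {i | (p i).1 = true} then ∏ i, w (p i).1 (p i).2 else 0,
    fun p => by dsimp only; split_ifs <;> simp [hnn],
    fun p => by dsimp only; split_ifs <;> simp [hnn], ?_, ?_, ?_, ?_⟩
  · rw [← Finset.sum_add_distrib]
    simp only [hsplit]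
    have : ∑ R, (w false R + w true R) = ∑ t : Bool × (Finset X × Finset Y), w t.1 t.2 := by
      rw [Finset.sum_add_distrib, add_comm]
      exact ((Fintype.sum_prod_type fun t : Bool × (Finset X × Finset Y) => w t.1 t.2).trans
        (Fintype.sum_bool _)).symm
    rw [this, Fintype.sum_pow]
  · intro x y
    rw [← one_pow (2 * l), ← hone x y, ← famCov_tuple_prod]
    simp only [famCov, ← Finset.sum_add_distrib]
    refine Finset.sum_congr rfl fun p _ => ?_
    split_ifs <;> simp
  · intro x y hf
    refine le_trans (famCov_mono (fun p => ?_) x y) (famCov_majority_le hw x y (hone x y) false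
      (by have := hcov x y; rw [hf] at this; linarith [hone x y]) l)
    have hcard : Finset.card {i | (p i).1 = true} + Finset.card {i | (p i).1 = false} = 2 * l := by
      have := Finset.card_filter_add_card_filter_not (s := (Finset.univ : Finset (Fin (2 * l))))
        (fun i => (p i).1 = true)
      simpa using this
    split_ifs with h1 h2 h2
    · exact hnn p
    · exact le_rfl
    · exact le_rfl
    · omega
  · intro x y hf
    exact famCov_majority_le hw x y (hone x y) true
      (by have := hcov x y; rw [hf] at this; linarith [hone x y]) l

end Amplification

theorem ninety_mul_le_two_pow {q r : ℕ} (hr : 1 ≤ r) (hq1 : 1 ≤ q) (hq : q ≤ 2 ^ (r + 1)) :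
    90 * (4 * q * (20 * r) + 1) ≤ 2 ^ (20 * r) := by
  have h1 : r ≤ 2 ^ r := Nat.lt_two_pow_self.le
  have h2 : q * r ≤ 2 ^ (r + 1) * 2 ^ r := Nat.mul_le_mul hq h1
  have h3 : 1 ≤ q * r := Nat.mul_pos hq1 hr
  calc 90 * (4 * q * (20 * r) + 1) ≤ 2 ^ 13 * (q * r) := by nlinarith
    _ ≤ 2 ^ 13 * (2 ^ (r + 1) * 2 ^ r) := Nat.mul_le_mul_left _ h2
    _ = 2 ^ (13 + (r + 1) + r) := by rw [pow_add _ (13 + (r + 1)), pow_add _ 13, mul_assoc]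
    _ ≤ 2 ^ (20 * r) := Nat.pow_le_pow_right (by norm_num) (by omega)

theorem three_pow_mul_leaves_le {q h L : ℕ} (hq : 1 ≤ q) (hh : 1 ≤ h)
    (hL : L ≤ (16 * 2 ^ (4 * q * h) * h + 1) ^ (4 * q * h + 1)) :
    3 ^ (135 * (q * h) ^ 2) * L ≤ 4 ^ (135 * (q * h) ^ 2) := by
  have hqh : 1 ≤ q * h := Nat.mul_pos hq hh
  have hhq : h ≤ q * h := Nat.le_mul_of_pos_left h hq
  have h1 : 16 * 2 ^ (4 * q * h) * h + 1 ≤ 2 ^ (9 * (q * h)) := by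
    have e1 : h + 1 ≤ 2 ^ h := Nat.lt_two_pow_self
    have e2 : 1 ≤ 2 ^ (4 * q * h) := Nat.one_le_two_pow
    calc 16 * 2 ^ (4 * q * h) * h + 1 ≤ 16 * 2 ^ (4 * q * h) * (h + 1) := by nlinarith
      _ ≤ 2 ^ 4 * 2 ^ (4 * q * h) * 2 ^ h := by
        simpa using Nat.mul_le_mul_left (16 * 2 ^ (4 * q * h)) e1
      _ = 2 ^ (4 + 4 * q * h + h) := by rw [pow_add, pow_add]
      _ ≤ 2 ^ (9 * (q * h)) := Nat.pow_le_pow_right (by norm_num) (by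
        have : 4 * q * h = 4 * (q * h) := by ring
        omega)
  have h2 : L ≤ 2 ^ (45 * (q * h) ^ 2) := by
    calc L ≤ _ := hL
      _ ≤ (2 ^ (9 * (q * h))) ^ (4 * q * h + 1) := Nat.pow_le_pow_left h1 _
      _ ≤ (2 ^ (9 * (q * h))) ^ (5 * (q * h)) :=
        Nat.pow_le_pow_right (by positivity) (by
          have : 4 * q * h = 4 * (q * h) := by ring
          omega)
      _ = 2 ^ (45 * (q * h) ^ 2) := by rw [← pow_mul]; congr 1; ring
  calc 3 ^ (135 * (q * h) ^ 2) * L ≤ 3 ^ (135 * (q * h) ^ 2) * 2 ^ (45 * (q * h) ^ 2) :=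
        Nat.mul_le_mul_left _ h2
    _ = (3 ^ 3 * 2) ^ (45 * (q * h) ^ 2) := by
      rw [mul_pow (3 ^ 3) 2, ← pow_mul]; congr 2; ring
    _ ≤ (4 ^ 3) ^ (45 * (q * h) ^ 2) := Nat.pow_le_pow_left (by norm_num) _
    _ = 4 ^ (135 * (q * h) ^ 2) := by rw [← pow_mul]; congr 1; ring

/-- A feasible solution of the partition bound of weight at most `2 ^ q` gives a protocol of
depth `O((q h)²)`, provided that `2 ^ h` is large enough compared with `q h`. -/
theorem CCdist_le_of_feasible {X Y : Type} [Fintype X] [Fintype Y] (f : X → Y → Bool)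
    {μA : X → ℝ} {μB : Y → ℝ} (hA : IsDist μA) (hB : IsDist μB)
    {w : Bool → Finset X × Finset Y → ℝ}
    (hw : ∀ z R, 0 ≤ w z R) (hcov : ∀ x y, 1 - 1 / 8 ≤ rcov (w (f x y)) x y)
    (hone : ∀ x y, rcov (w false) x y + rcov (w true) x y = 1) {q h : ℕ} (hq : 1 ≤ q)
    (hh : 1 ≤ h) (hwq : ∑ R, (w false R + w true R) ≤ 2 ^ q)
    (hlarge : 90 * (4 * q * h + 1) ≤ 2 ^ h) :
    CCdist (fun x y => μA x * μB y) f 0.49 ≤ 270 * (q * h) ^ 2 := by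
  obtain ⟨w₀, w₁, hw₀, hw₁, hsum, hadd, hc₀, hc₁⟩ :=
    exists_amplified_covers f hw hcov hone (2 * h)
  set ε : ℝ := (1 / 2) ^ h with hε
  have hε0 : 0 < ε := by positivity
  have hεh : ε * 2 ^ h = 1 := by rw [hε, ← mul_pow]; norm_num
  have hlarge' : 90 * (4 * q * h + 1) * ε ≤ 1 := by
    have : (90 * (4 * q * h + 1) : ℝ) ≤ 2 ^ h := by exact_mod_cast hlarge
    calc _ ≤ (2 : ℝ) ^ h * ε := mul_le_mul_of_nonneg_right this hε0.le
      _ = 1 := by rw [mul_comm]; exact hεh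
  have hqh0 : (0 : ℝ) ≤ 4 * q * h := by positivity
  have hεs : ε ≤ 1 / 90 := by nlinarith [mul_nonneg hqh0 hε0.le]
  have hδ : (1 / 2 : ℝ) ^ (2 * h) = ε ^ 2 := by rw [hε, ← pow_mul, mul_comm]
  rw [hδ] at hc₀ hc₁
  have hε2 : ε ^ 2 ≤ ε / 90 := by nlinarith
  set W : ℝ := 2 ^ (4 * q * h) with hW
  have hW0 : 1 ≤ W := one_le_pow₀ (by norm_num)
  have htot : ∑ p, w₀ p + ∑ p, w₁ p ≤ W := by
    rw [hsum, hW, show 4 * q * h = q * (2 * (2 * h)) by ring, pow_mul (2 : ℝ) q]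
    exact pow_le_pow_left₀ (Finset.sum_nonneg fun R _ => add_nonneg (hw _ _) (hw _ _)) hwq _
  have hs₀ := Finset.sum_nonneg fun p (_ : p ∈ Finset.univ) => hw₀ p
  have hs₁ := Finset.sum_nonneg fun p (_ : p ∈ Finset.univ) => hw₁ p
  have n₀ x y := famCov_nonneg (S := tupleRows) (T := tupleCols) hw₀ x y
  have n₁ x y := famCov_nonneg (S := tupleRows) (T := tupleCols) hw₁ x y
  obtain ⟨P, hPl, hPe⟩ := exists_protocol_of_covers hA.1 hB.1 f tupleRows tupleCols (w₀ := w₀)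
    (W := W) (η := 1 / 4) (δ := ε ^ 2) (τ := 4 * ε) hw₁ (by positivity) (by norm_num)
    (by positivity) (by linarith) (by nlinarith) (fun x y => by linarith [hadd x y, n₁ x y])
    (fun x y hf => by linarith [hadd x y, hc₀ x y hf])
    (fun x y => by
      cases hf : f x y
      · nlinarith [hadd x y, hc₁ x y hf, n₁ x y, n₀ x y]
      · nlinarith [hadd x y, hc₀ x y hf, n₁ x y, n₀ x y])
    (by rw [div_le_one (by positivity)]; linarith)
    (16 * 2 ^ (4 * q * h) * h) (4 * q * h + 1) Finset.univ Finset.univ w₀ hw₀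
    (fun _ => le_rfl) (by rw [pow_succ]; linarith)
  obtain ⟨P', hd, he⟩ := P.exists_balanced _ (three_pow_mul_leaves_le hq hh hPl)
  refine Nat.sInf_le ⟨P', by omega, ?_⟩
  have hcomm : commErr (fun x y => μA x * μB y) f P' =
      rectErr μA μB f P Finset.univ Finset.univ :=
    rectErr_congr (P := P') fun x _ y _ => he x y
  have hunc : uncovMass μA μB f (famCov tupleRows tupleCols w₀) Finset.univ Finset.univ ≤
      ε ^ 2 := by
    have : ε ^ 2 = ∑ x, ∑ y, ε ^ 2 * (μA x * μB y) := by
      simp only [← Finset.mul_sum, hA.2, hB.2, mul_one]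
    rw [this]
    refine Finset.sum_le_sum fun x _ => Finset.sum_le_sum fun y _ => ?_
    have hp := mul_nonneg (hA.1 x) (hB.1 y)
    split_ifs with hf
    · exact mul_le_mul_of_nonneg_right (by linarith [hadd x y, hc₁ x y hf]) hp
    · positivity
  have hρ : (1 - 1 / 4 / (4 * W)) ^ (16 * 2 ^ (4 * q * h) * h) ≤ ε := by
    have h1 : 1 - 1 / 4 / (4 * W) ≤ Real.exp (-(1 / 4 / (4 * W))) :=
      Real.one_sub_le_exp_neg _
    have h0 : 0 ≤ 1 - 1 / 4 / (4 * W) := by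
      rw [sub_nonneg, div_le_one (by positivity)]; linarith
    have h2 : Real.exp (-1) ≤ 1 / 2 := by
      rw [Real.exp_neg, inv_le_comm₀ (Real.exp_pos _) (by norm_num)]
      have := Real.add_one_le_exp (1 : ℝ)
      norm_num at this ⊢
      linarith
    calc _ ≤ Real.exp (-(1 / 4 / (4 * W))) ^ (16 * 2 ^ (4 * q * h) * h) :=
          pow_le_pow_left₀ h0 h1 _
      _ = Real.exp (-1) ^ h := by
        rw [← Real.exp_nat_mul, ← Real.exp_nat_mul]
        congr 1
        push_cast
        rw [← hW]
        field_simp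
        norm_num
      _ ≤ ε := pow_le_pow_left₀ (Real.exp_pos _).le h2 _
  rw [hA.2, hB.2] at hPe
  rw [hcomm]
  refine hPe.trans ?_
  push_cast
  have hj : (4 * q * h + 1 : ℝ) * (2 * (4 * ε) +
      (1 - 1 / 4 / (4 * W)) ^ (16 * 2 ^ (4 * q * h) * h)) ≤ (4 * q * h + 1) * (9 * ε) :=
    mul_le_mul_of_nonneg_left (by linarith) (by positivity)
  norm_num at hj ⊢
  linarith

/-- **CC vs partition bound (Theorem 1.1, eq. (2)).** There is a universal constant
`C > 0` such that for every `n`, every total `f : {0,1}ⁿ × {0,1}ⁿ → {0,1}` and every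
product distribution `μ = μA ⊗ μB` (with `log prt_{1/8}(f) ≥ 2`),
`CC^μ_{0.49}(f) ≤ C · (log prt_{1/8}(f) · log log prt_{1/8}(f))²`. -/
theorem cc_le_log_prt_sq :
    ∃ C : ℝ, 0 < C ∧
      ∀ (n : ℕ) (f : (Fin n → Bool) → (Fin n → Bool) → Bool)
        (μA μB : (Fin n → Bool) → ℝ), IsDist μA → IsDist μB →
        2 ≤ Real.logb 2 (prt f (1/8)) →
        (CCdist (fun x y => μA x * μB y) f 0.49 : ℝ) ≤
          C * (Real.logb 2 (prt f (1/8)) *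
            Real.logb 2 (Real.logb 2 (prt f (1/8)))) ^ 2 := by
  refine ⟨1728000, by norm_num, fun n f μA μB hA hB hc => ?_⟩
  set c := Real.logb 2 (prt f (1 / 8)) with hcdef
  have hc0 : 0 < c := by linarith
  have hprt0 : 0 ≤ prt f (1 / 8) := Real.sInf_nonneg fun v ⟨w, hw, _, _, hv⟩ => by
    rw [hv]
    exact Finset.sum_nonneg fun R _ => add_nonneg (hw _ _) (hw _ _)
  have hprt : 0 < prt f (1 / 8) := hprt0.lt_of_ne fun h => by
    rw [hcdef, ← h, Real.logb_zero] at hc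
    norm_num at hc
  have hprtc : prt f (1 / 8) = 2 ^ c :=
    (Real.rpow_logb (by norm_num) (by norm_num) hprt).symm
  obtain ⟨v, ⟨w, hw, hcov, hone, hv⟩, hvlt⟩ := exists_lt_of_csInf_lt
    (Set.nonempty_iff_ne_empty.2 fun h => hprt.ne' (by rw [prt, h, Real.sInf_empty]))
    (show prt f (1 / 8) < 2 * prt f (1 / 8) by linarith)
  set d := Real.logb 2 c with hd
  have hd1 : 1 ≤ d := by
    rw [hd, Real.le_logb_iff_rpow_le (by norm_num) hc0]
    simpa using hc
  have hr1 : 1 ≤ ⌈d⌉₊ := Nat.one_le_ceil_iff.2 (by linarith)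
  have hr : (⌈d⌉₊ : ℝ) ≤ 2 * d := by linarith [Nat.ceil_lt_add_one (by linarith : 0 ≤ d)]
  have hq : ((⌈c⌉₊ + 1 : ℕ) : ℝ) ≤ 2 * c := by
    push_cast
    linarith [Nat.ceil_lt_add_one hc0.le]
  have hcr : c ≤ 2 ^ ⌈d⌉₊ := by
    rw [← Real.rpow_natCast, ← Real.logb_le_iff_le_rpow (by norm_num) hc0]
    exact Nat.le_ceil d
  have hqr : ⌈c⌉₊ + 1 ≤ 2 ^ (⌈d⌉₊ + 1) := by
    have : ((⌈c⌉₊ + 1 : ℕ) : ℝ) ≤ ((2 ^ (⌈d⌉₊ + 1) : ℕ) : ℝ) := by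
      rw [Nat.cast_pow, pow_succ]
      push_cast at hq ⊢
      linarith
    exact_mod_cast this
  have hwq : ∑ R, (w false R + w true R) ≤ 2 ^ (⌈c⌉₊ + 1) := by
    have : (2 : ℝ) ^ c ≤ 2 ^ ⌈c⌉₊ := by
      rw [← Real.rpow_natCast]
      exact Real.rpow_le_rpow_of_exponent_le (by norm_num) (Nat.le_ceil c)
    rw [← hv, pow_succ]
    linarith
  have key := CCdist_le_of_feasible f hA hB hw hcov hone (q := ⌈c⌉₊ + 1) (h := 20 * ⌈d⌉₊)
    (by omega) (by omega) hwq (ninety_mul_le_two_pow hr1 (by omega) hqr)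
  calc (CCdist (fun x y => μA x * μB y) f 0.49 : ℝ)
      ≤ ((270 * ((⌈c⌉₊ + 1) * (20 * ⌈d⌉₊)) ^ 2 : ℕ) : ℝ) := by exact_mod_cast key
    _ = 270 * (((⌈c⌉₊ + 1 : ℕ) : ℝ) * (20 * (⌈d⌉₊ : ℝ))) ^ 2 := by push_cast; ring
    _ ≤ 270 * ((2 * c) * (20 * (2 * d))) ^ 2 := by gcongr
    _ = 1728000 * (c * d) ^ 2 := by ring
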